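/- For every odd natural number n ≥ 5, the Orchard crossing number of the wheel graph W_{n,1} equals n(n² − 4n + 11)/8. -/

import Mathlib

/-!
Common definitions for the Orchard crossing number
(Feder–Garber, "The Orchard crossing number of an abstract graph").
-/

noncomputable section

/-- Points of the plane. -/
abbrev Pt : Type := ℝ × ℝ

/-- The line through two points of the plane. -/
def lineThrough (p q : Pt) : Set Pt := (affineSpan ℝ ({p, q} : Set Pt) : Set Pt)

/-- A line (or any set) `L` separates the points `P` and `Q` if both lie off `L`
and they lie in different connected components of the complement of `L`. -/
def Separates (L : Set Pt) (P Q : Pt) : Prop :=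
  P ∉ L ∧ Q ∉ L ∧ connectedComponentIn Lᶜ P ≠ connectedComponentIn Lᶜ Q

theorem Separates.symm {L : Set Pt} {P Q : Pt} (h : Separates L P Q) : Separates L Q P :=
  ⟨h.2.1, h.1, h.2.2.symm⟩

/-- A generic configuration: a finite set of points, no three of which are collinear. -/
def GenericConfig (S : Set Pt) : Prop :=
  S.Finite ∧ ∀ p ∈ S, ∀ q ∈ S, ∀ r ∈ S, p ≠ q → p ≠ r → q ≠ r →
    ¬ Collinear ℝ ({p, q, r} : Set Pt)

/-- A finite set of points is in convex position if every point of it is an extreme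
point of its convex hull, i.e. lies outside the convex hull of the other points. -/
def ConvexPosition (S : Set Pt) : Prop :=
  ∀ p ∈ S, p ∉ convexHull ℝ (S \ {p})

variable {V : Type*} [Fintype V] [DecidableEq V]

/-- A rectilinear drawing of a graph on vertex set `V`: an injective placement of the
vertices in the plane whose image is a generic configuration. -/
def IsRectDrawing (f : V → Pt) : Prop :=
  Function.Injective f ∧ GenericConfig (Set.range f)

/-- `sepCount f s t` is `n(s,t)`: the number of (unordered) pairs of vertices, both
different from `s` and `t`, whose drawn points span a line separating `f s` from `f t`. -/
def sepCount (f : V → Pt) (s t : V) : ℕ :=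
  Set.ncard {e : Finset V | ∃ a b : V, e = {a, b} ∧ a ≠ b ∧ s ∉ e ∧ t ∉ e ∧
    Separates (lineThrough (f a) (f b)) (f s) (f t)}

theorem sepCount_symm (f : V → Pt) (s t : V) : sepCount f s t = sepCount f t s := by
  unfold sepCount
  congr 1
  ext e
  constructor
  · rintro ⟨a, b, rfl, hab, hs, ht, hsep⟩
    exact ⟨a, b, rfl, hab, ht, hs, hsep.symm⟩
  · rintro ⟨a, b, rfl, hab, ht, hs, hsep⟩
    exact ⟨a, b, rfl, hab, hs, ht, hsep.symm⟩

/-- The crossing number `n(R(G))` of a drawing: the sum of `n(s,t)` over all edges. -/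
def drawingCrossings (G : SimpleGraph V) (f : V → Pt) : ℕ :=
  ∑ e ∈ G.edgeSet.toFinite.toFinset,
    Sym2.lift ⟨fun s t => sepCount f s t, fun s t => sepCount_symm f s t⟩ e

/-- The Orchard crossing number: the minimum of `n(R(G))` over all rectilinear drawings. -/
def OCN (G : SimpleGraph V) : ℕ :=
  sInf {n | ∃ f : V → Pt, IsRectDrawing f ∧ drawingCrossings G f = n}

/-- The maximal Orchard crossing number: the maximum of `n(R(G))` over all drawings. -/
def MOCN (G : SimpleGraph V) : ℕ :=
  sSup {n | ∃ f : V → Pt, IsRectDrawing f ∧ drawingCrossings G f = n}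

/-- The open segment drawn for an edge. -/
def edgeSeg (f : V → Pt) (e : Sym2 V) : Set Pt :=
  Sym2.lift ⟨fun a b => openSegment ℝ (f a) (f b), fun a b => openSegment_symm ℝ (f a) (f b)⟩ e

/-- The number of unordered pairs of distinct edges of `G` whose drawn open segments
intersect. -/
def crossPairs (G : SimpleGraph V) (f : V → Pt) : ℕ :=
  Set.ncard {p : Finset (Sym2 V) | ∃ e₁ e₂ : Sym2 V, p = {e₁, e₂} ∧ e₁ ≠ e₂ ∧
    e₁ ∈ G.edgeSet ∧ e₂ ∈ G.edgeSet ∧ (edgeSeg f e₁ ∩ edgeSeg f e₂).Nonempty}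

/-- The rectilinear crossing number: the minimum number of crossing pairs of edges
over all rectilinear drawings. -/
def rcr (G : SimpleGraph V) : ℕ :=
  sInf {n | ∃ f : V → Pt, IsRectDrawing f ∧ crossPairs G f = n}

/-- The number of 4-element subsets of the drawn points which are in convex position. -/
def convexFour (f : V → Pt) : ℕ :=
  Set.ncard {Q : Finset Pt | Q.card = 4 ∧ (Q : Set Pt) ⊆ Set.range f ∧
    ConvexPosition (Q : Set Pt)}

/-- The cyclic successor on `Fin n`. -/
def nextFin {n : ℕ} (i : Fin n) : Fin n :=
  ⟨(i.val + 1) % n, Nat.mod_lt _ (Nat.zero_lt_of_lt i.isLt)⟩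

/-- The star graph `K_{n,1}` on `n+1` vertices: the center `0` is joined to each of
the `n` outer vertices. -/
def starGraph (n : ℕ) : SimpleGraph (Fin (n + 1)) :=
  SimpleGraph.fromEdgeSet {e | ∃ i : Fin n, e = s((0 : Fin (n + 1)), i.succ)}

/-- The wheel graph `W_{n,1}` on `n+1` vertices: a cycle on the `n` outer vertices
together with a hub `0` joined to each of them. -/
def wheelGraph (n : ℕ) : SimpleGraph (Fin (n + 1)) :=
  SimpleGraph.fromEdgeSet
    ({e | ∃ i : Fin n, e = s((0 : Fin (n + 1)), i.succ)} ∪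
     {e | ∃ i : Fin n, e = s(i.succ, (nextFin i).succ)})

/-- The cycle graph `C_n` on the outer vertices `1, …, n` of `Fin (n+1)`, together
with the isolated vertex `0`. -/
def cycleWithIsolated (n : ℕ) : SimpleGraph (Fin (n + 1)) :=
  SimpleGraph.fromEdgeSet {e | ∃ i : Fin n, e = s(i.succ, (nextFin i).succ)}

/-- `HullCycle f` says that for every `i`, all the other drawn points lie (strictly) on
one side of the line through `f i` and `f (i+1)`; for an injective generic placement this
means the points are in convex position and occur around the convex hull exactly in the
cyclic order `f 0, f 1, …`. -/
def HullCycle {m : ℕ} (f : Fin m → Pt) : Prop :=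
  ∀ i j l : Fin m, j ≠ i → j ≠ nextFin i → l ≠ i → l ≠ nextFin i →
    ¬ Separates (lineThrough (f i) (f (nextFin i))) (f j) (f l)

end

/-!
The line `pq` separates `x` from `y` exactly when `orient p q x` and `orient p q y` have opposite
signs. Write `a → b` when the rim point `b` lies to the left of the line directed from the hub `o`
to the rim point `a`, and let `l a` be the number of such `b`. This is a tournament on the rim
points. Three of them form a triangle whose sides separate no vertex from `o` only if the triangle
contains `o`, that is, if they are cyclic in the tournament; a transitive triple yields at least
one separated spoke, so the spokes contribute at least `∑ a, l a * (l a - 1) / 2`. Moreover, if the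
line `oa` has rim points on both sides, then it also separates the ends of some rim edge. For
`n = 2 * m + 1` the sum of the `l a` is `n * m`, and comparing `l * (l - 1)` with its tangent at
`l = m` gives the lower bound. The regular `n`-gon around `o` attains it: there `l a = m`, every
transitive triple accounts for exactly one separation, every line `oa` separates a single rim edge,
and no line through two rim points separates the ends of a rim edge.
-/

open scoped Finset Real

section Separation

variable {E : Type*} [AddCommGroup E] [Module ℝ E] [TopologicalSpace E] [IsTopologicalAddGroup E]
  [ContinuousSMul ℝ E]

theorem mul_pos_of_isPreconnected {X : Type*} [TopologicalSpace X] {s : Set X}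
    (hs : IsPreconnected s) {φ : X → ℝ} (hφ : ContinuousOn φ s) (hne : ∀ z ∈ s, φ z ≠ 0) {x y : X}
    (hx : x ∈ s) (hy : y ∈ s) : 0 < φ x * φ y := by
  by_contra! hxy
  have hzero : (0 : ℝ) ∈ Set.uIcc (φ x) (φ y) := by
    rw [Set.mem_uIcc]
    exact (mul_nonpos_iff.mp hxy).symm.imp_right And.symm
  obtain ⟨z, hz, hz0⟩ := (hs.image φ hφ).ordConnected.uIcc_subset
    (Set.mem_image_of_mem φ hx) (Set.mem_image_of_mem φ hy) hzero
  exact hne z hz hz0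

theorem connectedComponentIn_ne_zero_eq_iff (φ : E →ᵃ[ℝ] ℝ) (hφ : Continuous φ) {x y : E}
    (hx : φ x ≠ 0) (hy : φ y ≠ 0) :
    connectedComponentIn {z | φ z ≠ 0} x = connectedComponentIn {z | φ z ≠ 0} y ↔
      0 < φ x * φ y := by
  constructor
  · intro h
    have hy' : y ∈ connectedComponentIn {z | φ z ≠ 0} x := h ▸ mem_connectedComponentIn hy
    exact mul_pos_of_isPreconnected isPreconnected_connectedComponentIn hφ.continuousOn
      (fun z hz => connectedComponentIn_subset _ _ hz) (mem_connectedComponentIn hx) hy'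
  · intro h
    have hconvex : Convex ℝ {z | 0 < φ x * φ z} := (convex_Ioi 0).affine_preimage (φ x • φ)
    have hsubset : {z | 0 < φ x * φ z} ⊆ {z | φ z ≠ 0} := fun z hz => right_ne_zero_of_mul hz.ne'
    exact connectedComponentIn_eq <| hconvex.isPreconnected.subset_connectedComponentIn
      (mul_self_pos.mpr hx) hsubset h

end Separation

section Orient

/-- Twice the signed area of the triangle `p q r`; positive exactly when `p`, `q`, `r` are in
counterclockwise order. -/
def orient (p q r : Pt) : ℝ :=
  (q.1 - p.1) * (r.2 - p.2) - (q.2 - p.2) * (r.1 - p.1)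

theorem orient_rotate (p q r : Pt) : orient q r p = orient p q r := by
  unfold orient; ring

theorem orient_swap_left (p q r : Pt) : orient q p r = -orient p q r := by
  unfold orient; ring

theorem orient_swap_right (p q r : Pt) : orient p r q = -orient p q r := by
  unfold orient; ring

@[simp]
theorem orient_self_left (p q : Pt) : orient p p q = 0 := by
  unfold orient; ring

@[simp]
theorem orient_self_right (p q : Pt) : orient p q q = 0 := by
  unfold orient; ring

@[simp]
theorem orient_self_outer (p q : Pt) : orient p q p = 0 := by
  unfold orient; ring

theorem orient_eq_add (o p q r : Pt) :
    orient p q r = orient o p q + orient o q r + orient o r p := by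
  unfold orient; ring

/-- `orient p q` as an affine function of its last argument. -/
def orientAffine (p q : Pt) : Pt →ᵃ[ℝ] ℝ :=
  .mk' (orient p q) ((q.1 - p.1) • .snd ℝ ℝ ℝ - (q.2 - p.2) • .fst ℝ ℝ ℝ) p fun r => by
    simp [orient]

@[simp]
theorem coe_orientAffine (p q : Pt) : ⇑(orientAffine p q) = orient p q := rfl

theorem continuous_orient (p q : Pt) : Continuous (orient p q) := by
  unfold orient; fun_prop

theorem mem_lineThrough_iff {p q : Pt} (hpq : p ≠ q) (r : Pt) :
    r ∈ lineThrough p q ↔ orient p q r = 0 := by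
  rw [lineThrough, SetLike.mem_coe, mem_affineSpan_pair_iff_exists_lineMap_eq]
  constructor
  · rintro ⟨t, rfl⟩
    simp only [orient, AffineMap.lineMap_apply, vsub_eq_sub, vadd_eq_add, Prod.fst_add,
      Prod.snd_add, Prod.smul_fst, Prod.smul_snd, Prod.fst_sub, Prod.snd_sub, smul_eq_mul]
    ring
  · intro h
    have hnorm : (q.1 - p.1) ^ 2 + (q.2 - p.2) ^ 2 ≠ 0 := fun h0 => by
      have h1 : q.1 - p.1 = 0 := by nlinarith [sq_nonneg (q.1 - p.1), sq_nonneg (q.2 - p.2)]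
      have h2 : q.2 - p.2 = 0 := by nlinarith [sq_nonneg (q.1 - p.1), sq_nonneg (q.2 - p.2)]
      exact hpq (Prod.ext (by linarith) (by linarith))
    unfold orient at h
    -- The parameter of the orthogonal projection of `r` to the line.
    refine ⟨((q.1 - p.1) * (r.1 - p.1) + (q.2 - p.2) * (r.2 - p.2)) /
      ((q.1 - p.1) ^ 2 + (q.2 - p.2) ^ 2), Prod.ext ?_ ?_⟩ <;>
    simp only [AffineMap.lineMap_apply, vsub_eq_sub, vadd_eq_add, Prod.fst_add,
      Prod.snd_add, Prod.smul_fst, Prod.smul_snd, Prod.fst_sub, Prod.snd_sub, smul_eq_mul] <;>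
    field_simp
    · linear_combination (q.2 - p.2) * h
    · linear_combination (p.1 - q.1) * h

theorem collinear_iff_orient_eq_zero {p q : Pt} (hpq : p ≠ q) (r : Pt) :
    Collinear ℝ ({p, q, r} : Set Pt) ↔ orient p q r = 0 := by
  have hperm : ({p, q, r} : Set Pt) = {r, p, q} := by grind
  rw [← mem_lineThrough_iff hpq]
  exact ⟨fun h => h.mem_affineSpan_of_mem_of_ne (by simp) (by simp) (by simp) hpq,
    fun h => hperm ▸ collinear_insert_of_mem_affineSpan_pair h⟩

theorem separates_lineThrough_iff {p q : Pt} (hpq : p ≠ q) (x y : Pt) :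
    Separates (lineThrough p q) x y ↔ orient p q x * orient p q y < 0 := by
  have hcompl : (lineThrough p q)ᶜ = {z | orientAffine p q z ≠ 0} := by
    ext z
    simp [mem_lineThrough_iff hpq]
  simp only [Separates, hcompl, mem_lineThrough_iff hpq]
  constructor
  · rintro ⟨hx, hy, hne⟩
    rw [Ne, connectedComponentIn_ne_zero_eq_iff _ (continuous_orient p q) hx hy, not_lt] at hne
    exact hne.lt_of_ne (mul_ne_zero hx hy)
  · intro h
    have hx := left_ne_zero_of_mul h.ne
    have hy := right_ne_zero_of_mul h.ne
    refine ⟨hx, hy, ?_⟩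
    rw [Ne, connectedComponentIn_ne_zero_eq_iff _ (continuous_orient p q) hx hy]
    exact h.not_gt

theorem isRectDrawing_iff_orient_ne_zero {V : Type*} [Finite V] (hV : 3 ≤ ENat.card V)
    {f : V → Pt} :
    IsRectDrawing f ↔ ∀ a b c, a ≠ b → a ≠ c → b ≠ c → orient (f a) (f b) (f c) ≠ 0 := by
  constructor
  · rintro ⟨hinj, -, h⟩ a b c hab hac hbc
    rw [Ne, ← collinear_iff_orient_eq_zero (hinj.ne hab)]
    exact h _ ⟨a, rfl⟩ _ ⟨b, rfl⟩ _ ⟨c, rfl⟩ (hinj.ne hab) (hinj.ne hac) (hinj.ne hbc)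
  · intro h
    refine ⟨fun a b hab => ?_, Set.finite_range f, ?_⟩
    · by_contra hne
      obtain ⟨c, hca, hcb⟩ := ENat.exists_ne_ne_of_three_le hV a b
      exact h a b c hne hca.symm hcb.symm (by rw [hab, orient_self_left])
    · rintro _ ⟨a, rfl⟩ _ ⟨b, rfl⟩ _ ⟨c, rfl⟩ hab hac hbc
      rw [collinear_iff_orient_eq_zero hab]
      exact h a b c (ne_of_apply_ne f hab) (ne_of_apply_ne f hac) (ne_of_apply_ne f hbc)

end Orient

section SeparationCount

/-- The indicator of the event that the line `pq` separates `x` from `y`. It vanishes when `p = q`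
and when `x` or `y` lies on the line. -/
noncomputable def sepIndicator (p q x y : Pt) : ℕ :=
  if orient p q x * orient p q y < 0 then 1 else 0

theorem sepIndicator_swap_line (p q x y : Pt) : sepIndicator q p x y = sepIndicator p q x y := by
  simp only [sepIndicator, orient_swap_left p q, neg_mul_neg]

@[simp]
theorem sepIndicator_self (p x y : Pt) : sepIndicator p p x y = 0 := by
  simp [sepIndicator]

@[simp]
theorem sepIndicator_left_left (p q y : Pt) : sepIndicator p q p y = 0 := by
  simp [sepIndicator]

@[simp]
theorem sepIndicator_right_left (p q y : Pt) : sepIndicator p q q y = 0 := by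
  simp [sepIndicator]

@[simp]
theorem sepIndicator_left_right (p q x : Pt) : sepIndicator p q x p = 0 := by
  simp [sepIndicator]

@[simp]
theorem sepIndicator_right_right (p q x : Pt) : sepIndicator p q x q = 0 := by
  simp [sepIndicator]

/-- The graph whose edges are the pairs of vertices spanning a line that separates `s` from `t`. -/
def separatorGraph {V : Type*} (f : V → Pt) (s t : V) : SimpleGraph V where
  Adj a b := orient (f a) (f b) (f s) * orient (f a) (f b) (f t) < 0
  symm := ⟨fun a b h => by rwa [orient_swap_left (f a), orient_swap_left (f a), neg_mul_neg]⟩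
  loopless := ⟨fun a h => by simp at h⟩

theorem sepCount_eq_ncard_edgeSet {V : Type*} [DecidableEq V] {f : V → Pt}
    (hf : Function.Injective f) (s t : V) :
    sepCount f s t = (separatorGraph f s t).edgeSet.ncard := by
  have hinj : Function.Injective (Sym2.toFinset (α := V)) := fun e e' h =>
    Sym2.ext fun x => by simp only [← Sym2.mem_toFinset, h]
  rw [sepCount, ← Set.ncard_image_of_injective _ hinj]
  congr 1
  ext e
  constructor
  · rintro ⟨a, b, rfl, hab, -, -, hsep⟩
    exact ⟨s(a, b), (separates_lineThrough_iff (hf.ne hab) _ _).mp hsep, Sym2.toFinset_mk_eq⟩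
  · rintro ⟨⟨a, b⟩, hadj : (separatorGraph f s t).Adj a b, rfl⟩
    have hsep := (separates_lineThrough_iff (hf.ne hadj.ne) _ _).mpr hadj
    refine ⟨a, b, Sym2.toFinset_mk_eq, hadj.ne, ?_, ?_, hsep⟩ <;>
    · rw [Sym2.mem_toFinset]
      rintro h
      obtain rfl | rfl := Sym2.mem_iff.mp h <;> simp [separatorGraph] at hadj

theorem two_mul_sepCount {V : Type*} [Fintype V] [DecidableEq V] {f : V → Pt}
    (hf : Function.Injective f) (s t : V) :
    2 * sepCount f s t = ∑ a, ∑ b, sepIndicator (f a) (f b) (f s) (f t) := by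
  classical
  rw [sepCount_eq_ncard_edgeSet hf, ← SimpleGraph.coe_edgeFinset, Set.ncard_coe_finset,
    ← SimpleGraph.sum_degrees_eq_twice_card_edges]
  refine Finset.sum_congr rfl fun a _ => ?_
  rw [← SimpleGraph.card_neighborFinset_eq_degree, SimpleGraph.neighborFinset_eq_filter,
    Finset.card_filter]
  rfl

end SeparationCount

section Wheel

open Matrix (vecCons)

variable {n : ℕ}

theorem val_nextFin_cases (i : Fin n) :
    (i.val + 1 < n ∧ (nextFin i).val = i.val + 1) ∨ (i.val + 1 = n ∧ (nextFin i).val = 0) := by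
  rcases (show i.val + 1 ≤ n from i.isLt).lt_or_eq with h | h
  · exact Or.inl ⟨h, Nat.mod_eq_of_lt h⟩
  · exact Or.inr ⟨h, by simp [nextFin, h]⟩

theorem nextFin_injective : Function.Injective (nextFin (n := n)) := fun i j h => by
  have hi := val_nextFin_cases i
  have hj := val_nextFin_cases j
  rw [h] at hi
  omega

theorem exists_nextFin_not {P : Fin n → Prop} {i j : Fin n} (hi : P i) (hj : ¬ P j) :
    ∃ k, P k ∧ ¬ P (nextFin k) := by
  by_contra! hclosed
  have hiter : ∀ k, P (nextFin^[k] i) := fun k => by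
    induction k with
    | zero => exact hi
    | succ k ih => rw [Function.iterate_succ_apply']; exact hclosed _ ih
  have hval : ∀ k, (nextFin^[k] i).val = (i.val + k) % n := fun k => by
    induction k with
    | zero => exact (Nat.mod_eq_of_lt i.isLt).symm
    | succ k ih => simp [Function.iterate_succ_apply', nextFin, ih, add_assoc]
  have hreach : nextFin^[n + j.val - i.val] i = j := Fin.ext <| by
    rw [hval, show i.val + (n + j.val - i.val) = j.val + n by omega, Nat.add_mod_right,
      Nat.mod_eq_of_lt j.isLt]
  exact hj (hreach ▸ hiter _)

theorem exists_mul_nextFin_neg {D : Fin n → ℝ} {a i j : Fin n} (hD : ∀ k, k ≠ a → D k ≠ 0)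
    (hi : 0 < D i) (hj : D j < 0) : ∃ k, D k * D (nextFin k) < 0 := by
  obtain ⟨p, hp, hp'⟩ := exists_nextFin_not (P := fun k => 0 < D k) hi hj.not_gt
  obtain ⟨q, hq, hq'⟩ := exists_nextFin_not (P := fun k => D k < 0) hj hi.not_gt
  rw [not_lt] at hp' hq'
  -- Only one of the two exits, from the positive and from the negative places, can lead to `a`.
  by_cases hpa : nextFin p = a
  · have hqa : nextFin q ≠ a := fun hqa => by
      rw [nextFin_injective (hpa.trans hqa.symm)] at hp
      exact hp.not_gt hq
    exact ⟨q, mul_neg_of_neg_of_pos hq (hq'.lt_of_ne' (hD _ hqa))⟩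
  · exact ⟨p, mul_neg_of_pos_of_neg hp (hp'.lt_of_ne (hD _ hpa))⟩

theorem edgeSet_wheelGraph (hn : 2 ≤ n) : (wheelGraph n).edgeSet =
    Set.range (fun i : Fin n => s(0, i.succ)) ∪
      Set.range fun i : Fin n => s(i.succ, (nextFin i).succ) := by
  ext e
  simp only [wheelGraph, SimpleGraph.edgeSet_fromEdgeSet, Set.mem_sdiff, Set.mem_union,
    Set.mem_ofPred_eq, Set.mem_range, eq_comm (b := e), and_iff_left_iff_imp]
  rintro (⟨i, rfl⟩ | ⟨i, rfl⟩)
  · simp [Fin.ext_iff]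
  · have := val_nextFin_cases i
    simp only [Sym2.mem_diagSet, Sym2.mk_isDiag_iff, Fin.ext_iff, Fin.val_succ]
    omega

theorem rimEdge_injective (hn : 3 ≤ n) :
    Function.Injective fun i : Fin n => s(i.succ, (nextFin i).succ) := fun i j h => by
  have hi := val_nextFin_cases i
  have hj := val_nextFin_cases j
  simp only [Sym2.eq_iff, Fin.ext_iff, Fin.val_succ] at h
  omega

theorem drawingCrossings_wheelGraph (hn : 3 ≤ n) (f : Fin (n + 1) → Pt) :
    drawingCrossings (wheelGraph n) f =
      ∑ i : Fin n, sepCount f 0 i.succ + ∑ i : Fin n, sepCount f i.succ (nextFin i).succ := by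
  have hedges : (wheelGraph n).edgeSet.toFinite.toFinset =
      (Finset.univ.image fun i : Fin n => s(0, i.succ)) ∪
        Finset.univ.image fun i : Fin n => s(i.succ, (nextFin i).succ) := by
    rw [← Finset.coe_inj]
    simp [edgeSet_wheelGraph (by omega : 2 ≤ n)]
  rw [drawingCrossings, hedges, Finset.sum_union, Finset.sum_image,
    Finset.sum_image (rimEdge_injective hn).injOn]
  · rfl
  · intro i _ j _ h
    simpa [Fin.ext_iff] using h
  · simp [Finset.disjoint_left, Fin.ext_iff]

theorem two_mul_sepCount_spoke {o : Pt} {g : Fin n → Pt} (hf : Function.Injective (vecCons o g))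
    (i : Fin n) :
    2 * sepCount (vecCons o g) 0 i.succ = ∑ a, ∑ b, sepIndicator (g a) (g b) o (g i) := by
  simp [two_mul_sepCount hf, Fin.sum_univ_succ]

theorem two_mul_sepCount_rimEdge {o : Pt} {g : Fin n → Pt}
    (hf : Function.Injective (vecCons o g)) (i j : Fin n) :
    2 * sepCount (vecCons o g) i.succ j.succ =
      ∑ a, ∑ b, sepIndicator (g a) (g b) (g i) (g j) +
        2 * ∑ a, sepIndicator o (g a) (g i) (g j) := by
  simp only [two_mul_sepCount hf, Fin.sum_univ_succ, Matrix.cons_val_zero, Matrix.cons_val_succ,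
    sepIndicator_self, sepIndicator_swap_line o, Finset.sum_add_distrib]
  ring

theorem two_mul_drawingCrossings_wheelGraph (hn : 3 ≤ n) {o : Pt} {g : Fin n → Pt}
    (hf : Function.Injective (vecCons o g)) :
    2 * drawingCrossings (wheelGraph n) (vecCons o g) =
      ∑ i, ∑ a, ∑ b, sepIndicator (g a) (g b) o (g i) +
        ∑ i, ∑ a, ∑ b, sepIndicator (g a) (g b) (g i) (g (nextFin i)) +
        2 * ∑ a, ∑ i, sepIndicator o (g a) (g i) (g (nextFin i)) := by
  rw [drawingCrossings_wheelGraph hn, mul_add, Finset.mul_sum, Finset.mul_sum,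
    Finset.sum_comm (f := fun a i => sepIndicator o (g a) (g i) (g (nextFin i)))]
  simp only [two_mul_sepCount_spoke hf, two_mul_sepCount_rimEdge hf, Finset.sum_add_distrib,
    Finset.mul_sum, add_assoc]

end Wheel

section Star

variable {ι : Type*} {o : Pt} {g : ι → Pt}

/-- The hub `o` and the points `g i` are distinct and no three of them are collinear (for at least
two points `g i`). -/
structure IsGenericStar (o : Pt) (g : ι → Pt) : Prop where
  hub_ne_zero : ∀ ⦃a b⦄, a ≠ b → orient o (g a) (g b) ≠ 0
  rim_ne_zero : ∀ ⦃a b c⦄, a ≠ b → a ≠ c → b ≠ c → orient (g a) (g b) (g c) ≠ 0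

theorem isRectDrawing_vecCons_iff {n : ℕ} (hn : 2 ≤ n) {g : Fin n → Pt} :
    IsRectDrawing (Matrix.vecCons o g) ↔ IsGenericStar o g := by
  rw [isRectDrawing_iff_orient_ne_zero (by simpa using by exact_mod_cast Nat.succ_le_succ hn)]
  constructor
  · intro h
    exact ⟨fun a b hab => h 0 a.succ b.succ (Fin.succ_ne_zero _).symm (Fin.succ_ne_zero _).symm
        (Fin.succ_injective _ |>.ne hab),
      fun a b c hab hac hbc => h a.succ b.succ c.succ (Fin.succ_injective _ |>.ne hab)
        (Fin.succ_injective _ |>.ne hac) (Fin.succ_injective _ |>.ne hbc)⟩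
  · intro h
    have hsecond {a b : Fin n} (hab : a ≠ b) : orient (g a) o (g b) ≠ 0 := by
      rw [orient_swap_left, neg_ne_zero]
      exact h.hub_ne_zero hab
    have hthird {a b : Fin n} (hab : a ≠ b) : orient (g a) (g b) o ≠ 0 := by
      rw [orient_rotate]
      exact h.hub_ne_zero hab
    intro a b c
    cases a using Fin.cases <;> cases b using Fin.cases <;> cases c using Fin.cases <;>
      simp +contextual [h.hub_ne_zero, h.rim_ne_zero, hsecond, hthird]

theorem sum_le_sum_of_cyclic_le {M : Type*} [Fintype ι] [AddCommMonoid M] [LinearOrder M]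
    [IsOrderedCancelAddMonoid M] {F G : ι → ι → ι → M}
    (h : ∀ a b c, F a b c + F b c a + F c a b ≤ G a b c + G b c a + G c a b) :
    ∑ a, ∑ b, ∑ c, F a b c ≤ ∑ a, ∑ b, ∑ c, G a b c := by
  have hcyclic (H : ι → ι → ι → M) :
      ∑ a, ∑ b, ∑ c, (H a b c + H b c a + H c a b) = 3 • ∑ a, ∑ b, ∑ c, H a b c := by
    have h1 : ∑ a, ∑ b, ∑ c, H b c a = ∑ a, ∑ b, ∑ c, H a b c :=
      Finset.sum_comm.trans (Finset.sum_congr rfl fun _ _ => Finset.sum_comm)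
    have h2 : ∑ a, ∑ b, ∑ c, H c a b = ∑ a, ∑ b, ∑ c, H a b c :=
      (Finset.sum_congr rfl fun _ _ => Finset.sum_comm).trans Finset.sum_comm
    simp only [Finset.sum_add_distrib, h1, h2]
    abel
  have hsum := Finset.sum_le_sum fun a (_ : a ∈ Finset.univ) =>
    Finset.sum_le_sum fun b (_ : b ∈ Finset.univ) =>
    Finset.sum_le_sum fun c (_ : c ∈ Finset.univ) => h a b c
  rw [hcyclic, hcyclic] at hsum
  exact (nsmul_le_nsmul_iff_right three_ne_zero).mp hsum

section SignCount

variable {R : Type*} [Ring R] [LinearOrder R] [IsStrictOrderedRing R] {x y z t : R}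

/- In both lemmas `x`, `y`, `z` stand for the orientations of `oca`, `oab`, `obc`, and `t` for the
orientation of the triangle `cab`. The summands without `t` tell which of `c`, `a`, `b` has the
other two points to its left as seen from `o`; those with `t` tell which sides separate `o` from the
opposite vertex. -/
theorem ite_fork_le_ite_mul_neg (hx : x ≠ 0) (hy : y ≠ 0) (hz : z ≠ 0) (ht : t ≠ 0) :
    ((if 0 < x ∧ z < 0 then 1 else 0) + (if 0 < y ∧ x < 0 then 1 else 0) +
      (if 0 < z ∧ y < 0 then 1 else 0) : ℕ) ≤
    (if y * t < 0 then 1 else 0) + (if z * t < 0 then 1 else 0) +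
      (if x * t < 0 then 1 else 0) := by
  simp only [mul_neg_iff]
  rcases hx.lt_or_gt with hx | hx <;> rcases hy.lt_or_gt with hy | hy <;>
    rcases hz.lt_or_gt with hz | hz <;> rcases ht.lt_or_gt with ht | ht <;>
    simp [hx, hy, hz, ht, hx.not_gt, hy.not_gt, hz.not_gt, ht.not_gt]

theorem ite_mul_neg_le_ite_fork (hx : x ≠ 0) (hy : y ≠ 0) (hz : z ≠ 0)
    (hxy : ¬(x * t < 0 ∧ y * t < 0)) (hyz : ¬(y * t < 0 ∧ z * t < 0))
    (hzx : ¬(z * t < 0 ∧ x * t < 0)) :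
    ((if y * t < 0 then 1 else 0) + (if z * t < 0 then 1 else 0) +
      (if x * t < 0 then 1 else 0) : ℕ) ≤
    (if 0 < x ∧ z < 0 then 1 else 0) + (if 0 < y ∧ x < 0 then 1 else 0) +
      (if 0 < z ∧ y < 0 then 1 else 0) := by
  simp only [mul_neg_iff] at *
  rcases hx.lt_or_gt with hx | hx <;> rcases hy.lt_or_gt with hy | hy <;>
    rcases hz.lt_or_gt with hz | hz <;> rcases lt_trichotomy t 0 with ht | ht | ht <;>
    simp_all [hx.not_gt, hy.not_gt, hz.not_gt, ht.not_gt]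

end SignCount

theorem sepIndicator_hub (o p q r : Pt) :
    sepIndicator p q o r = if orient o p q * orient p q r < 0 then 1 else 0 := by
  rw [sepIndicator, orient_rotate o p q]

variable [Fintype ι]

/-- The points `g b` strictly to the left of the line directed from the hub `o` to `g a`. -/
noncomputable def leftSet (o : Pt) (g : ι → Pt) (a : ι) : Finset ι := {b | 0 < orient o (g a) (g b)}

/-- The points `g b` strictly to the right of the line directed from the hub `o` to `g a`. -/
noncomputable def rightSet (o : Pt) (g : ι → Pt) (a : ι) : Finset ι :=
  {b | orient o (g a) (g b) < 0}

@[simp]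
theorem mem_leftSet {a b : ι} : b ∈ leftSet o g a ↔ 0 < orient o (g a) (g b) := by
  simp [leftSet]

@[simp]
theorem mem_rightSet {a b : ι} : b ∈ rightSet o g a ↔ orient o (g a) (g b) < 0 := by
  simp [rightSet]

theorem sum_card_rightSet : ∑ a, #(rightSet o g a) = ∑ a, #(leftSet o g a) := by
  simp only [leftSet, rightSet, Finset.card_filter]
  rw [Finset.sum_comm]
  refine Finset.sum_congr rfl fun a _ => Finset.sum_congr rfl fun b _ => ?_
  simp only [orient_swap_right o (g a) (g b), Left.neg_neg_iff]

theorem IsGenericStar.card_leftSet_add_card_rightSet (h : IsGenericStar o g) (a : ι) :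
    #(leftSet o g a) + #(rightSet o g a) = Fintype.card ι - 1 := by
  classical
  have hdisj : Disjoint (leftSet o g a) (rightSet o g a) := by
    simpa [Finset.disjoint_left] using fun b => le_of_lt
  have hunion : leftSet o g a ∪ rightSet o g a = Finset.univ.erase a := by
    ext b
    rcases eq_or_ne b a with rfl | hb
    · simp
    · simpa [hb] using (h.hub_ne_zero hb.symm).lt_or_gt.symm
  rw [← Finset.card_union_of_disjoint hdisj, hunion, Finset.card_erase_of_mem (Finset.mem_univ a),
    Finset.card_univ]

theorem IsGenericStar.two_mul_sum_card_leftSet (h : IsGenericStar o g) :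
    2 * ∑ a, #(leftSet o g a) = Fintype.card ι * (Fintype.card ι - 1) := by
  calc 2 * ∑ a, #(leftSet o g a)
      = ∑ a, (#(leftSet o g a) + #(rightSet o g a)) := by
        rw [Finset.sum_add_distrib, sum_card_rightSet, two_mul]
    _ = Fintype.card ι * (Fintype.card ι - 1) := by simp [h.card_leftSet_add_card_rightSet]

theorem sum_card_offDiag_leftSet [DecidableEq ι] :
    ∑ a, #(leftSet o g a).offDiag = ∑ a, ∑ b, ∑ c,
      if b ≠ c ∧ 0 < orient o (g a) (g b) ∧ orient o (g c) (g a) < 0 then 1 else 0 := by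
  refine Finset.sum_congr rfl fun a _ => ?_
  rw [← Fintype.sum_prod_type', ← Finset.card_filter]
  congr 1
  ext ⟨b, c⟩
  simp only [Finset.mem_offDiag, mem_leftSet, ne_eq, Finset.mem_filter_univ,
    orient_swap_right o (g a) (g c), Left.neg_neg_iff]
  tauto

theorem IsGenericStar.sum_card_offDiag_leftSet_le (h : IsGenericStar o g) :
    ∑ a, #(leftSet o g a).offDiag ≤ ∑ c, ∑ a, ∑ b, sepIndicator (g a) (g b) o (g c) := by
  classical
  rw [sum_card_offDiag_leftSet]
  refine sum_le_sum_of_cyclic_le fun c a b => ?_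
  by_cases hdistinct : c ≠ a ∧ c ≠ b ∧ a ≠ b
  · obtain ⟨hca, hcb, hab⟩ := hdistinct
    have hbound := ite_fork_le_ite_mul_neg (h.hub_ne_zero hca) (h.hub_ne_zero hab)
      (h.hub_ne_zero hcb.symm) (h.rim_ne_zero hca hcb hab)
    simpa only [sepIndicator_hub, orient_rotate (g c) (g a) (g b),
      ← orient_rotate (g b) (g c) (g a), hca, hab, hcb.symm, ne_eq, not_false_eq_true,
      true_and] using hbound
  · have : c = a ∨ c = b ∨ a = b := by tauto
    rcases this with rfl | rfl | rfl <;> simp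

theorem IsGenericStar.le_sum_card_offDiag_leftSet (h : IsGenericStar o g)
    (hone : ∀ a b c, ¬(orient o (g a) (g b) * orient (g a) (g b) (g c) < 0 ∧
      orient o (g b) (g c) * orient (g a) (g b) (g c) < 0)) :
    ∑ c, ∑ a, ∑ b, sepIndicator (g a) (g b) o (g c) ≤ ∑ a, #(leftSet o g a).offDiag := by
  classical
  rw [sum_card_offDiag_leftSet]
  refine sum_le_sum_of_cyclic_le fun c a b => ?_
  by_cases hdistinct : c ≠ a ∧ c ≠ b ∧ a ≠ b
  · obtain ⟨hca, hcb, hab⟩ := hdistinct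
    have hbound := ite_mul_neg_le_ite_fork (h.hub_ne_zero hca) (h.hub_ne_zero hab)
      (h.hub_ne_zero hcb.symm) (hone c a b)
      (by rw [← orient_rotate (g c) (g a) (g b)]; exact hone a b c)
      (by rw [orient_rotate (g b) (g c) (g a)]; exact hone b c a)
    simpa only [sepIndicator_hub, orient_rotate (g c) (g a) (g b),
      ← orient_rotate (g b) (g c) (g a), hca, hab, hcb.symm, ne_eq, not_false_eq_true,
      true_and] using hbound
  · have : c = a ∨ c = b ∨ a = b := by tauto
    rcases this with rfl | rfl | rfl <;> simp

end Star

section LowerBound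

variable {o : Pt}

theorem IsGenericStar.one_le_sum_sepIndicator_rimEdge {n : ℕ} {g : Fin n → Pt}
    (h : IsGenericStar o g) {a : Fin n} (hleft : (leftSet o g a).Nonempty)
    (hright : (rightSet o g a).Nonempty) :
    1 ≤ ∑ i, sepIndicator o (g a) (g i) (g (nextFin i)) := by
  obtain ⟨i, hi⟩ := hleft
  obtain ⟨j, hj⟩ := hright
  obtain ⟨k, hk⟩ := exists_mul_nextFin_neg (D := fun b => orient o (g a) (g b))
    (fun b hb => h.hub_ne_zero hb.symm) (mem_leftSet.mp hi) (mem_rightSet.mp hj)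
  calc 1 = sepIndicator o (g a) (g k) (g (nextFin k)) := (if_pos hk).symm
    _ ≤ ∑ i, sepIndicator o (g a) (g i) (g (nextFin i)) :=
      Finset.single_le_sum (f := fun i => sepIndicator o (g a) (g i) (g (nextFin i)))
        (fun _ _ => Nat.zero_le _) (Finset.mem_univ k)

/- The left-hand side is `m * (m - 1) + 2` plus the linear term of `l * (l - 1)` at `l = m`. -/
theorem tangent_le_mul_pred_add {m l s : ℤ} (hm : 2 ≤ m) (hs : 0 ≤ s)
    (hs' : l ≠ 0 → l ≠ 2 * m → 1 ≤ s) :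
    m * (m - 1) + 2 + (2 * m - 1) * (l - m) ≤ l * (l - 1) + 2 * s := by
  have hsq : 2 ≤ (l - m) ^ 2 + 2 * s := by
    by_cases hl : l = 0 ∨ l = 2 * m
    · have : (l - m) ^ 2 = m ^ 2 := by rcases hl with rfl | rfl <;> ring
      nlinarith
    · rw [not_or] at hl
      linarith [sq_nonneg (l - m), hs' hl.1 hl.2]
  linarith

variable {m : ℕ} {g : Fin (2 * m + 1) → Pt}

theorem IsGenericStar.sum_card_leftSet (h : IsGenericStar o g) :
    ∑ a, #(leftSet o g a) = (2 * m + 1) * m := by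
  have hdouble := h.two_mul_sum_card_leftSet
  rw [Fintype.card_fin, Nat.add_sub_cancel, mul_left_comm] at hdouble
  exact Nat.mul_left_cancel two_pos hdouble

theorem IsGenericStar.tangent_le_card_offDiag_leftSet_add (hm : 2 ≤ m) (h : IsGenericStar o g)
    (a : Fin (2 * m + 1)) :
    (m * (m - 1) + 2 + (2 * m - 1) * (#(leftSet o g a) - m) : ℤ) ≤
      (#(leftSet o g a).offDiag + 2 * ∑ i, sepIndicator o (g a) (g i) (g (nextFin i)) : ℕ) := by
  have hcard := h.card_leftSet_add_card_rightSet a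
  rw [Fintype.card_fin] at hcard
  rw [Finset.offDiag_card, Nat.cast_add, Nat.cast_sub (Nat.le_mul_self _), Nat.cast_mul,
    ← mul_sub_one, Nat.cast_mul]
  refine tangent_le_mul_pred_add (by exact_mod_cast hm) (Nat.cast_nonneg _) fun hl hl' => ?_
  exact_mod_cast h.one_le_sum_sepIndicator_rimEdge (Finset.card_pos.mp (by omega))
    (Finset.card_pos.mp (by omega))

theorem IsGenericStar.le_two_mul_drawingCrossings (hm : 2 ≤ m) (h : IsGenericStar o g) :
    ((2 * m + 1) * (m * (m - 1) + 2) : ℤ) ≤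
      2 * drawingCrossings (wheelGraph (2 * m + 1)) (Matrix.vecCons o g) := by
  have hinj := ((isRectDrawing_vecCons_iff (by omega)).mpr h).1
  have hleft : ∑ a, (#(leftSet o g a) : ℤ) = (2 * m + 1) * m := by
    exact_mod_cast h.sum_card_leftSet
  have hcrossings : ∑ a, (#(leftSet o g a).offDiag +
      2 * ∑ i, sepIndicator o (g a) (g i) (g (nextFin i))) ≤
        2 * drawingCrossings (wheelGraph (2 * m + 1)) (Matrix.vecCons o g) := by
    rw [Finset.sum_add_distrib, ← Finset.mul_sum,
      two_mul_drawingCrossings_wheelGraph (by omega) hinj]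
    have hspokes := h.sum_card_offDiag_leftSet_le
    omega
  calc ((2 * m + 1) * (m * (m - 1) + 2) : ℤ)
      = ∑ a, (m * (m - 1) + 2 + (2 * m - 1) * (#(leftSet o g a) - m) : ℤ) := by
        simp [Finset.sum_add_distrib, ← Finset.mul_sum, hleft]
    _ ≤ ∑ a, (#(leftSet o g a).offDiag +
          2 * ∑ i, sepIndicator o (g a) (g i) (g (nextFin i)) : ℕ) := by
        rw [Nat.cast_sum]
        exact Finset.sum_le_sum fun a _ => h.tangent_le_card_offDiag_leftSet_add hm a
    _ ≤ 2 * drawingCrossings (wheelGraph (2 * m + 1)) (Matrix.vecCons o g) := by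
        exact_mod_cast hcrossings

end LowerBound

section Circle

/-- The point of the unit circle at angle `θ`. -/
noncomputable def circlePt (θ : ℝ) : Pt := (Real.cos θ, Real.sin θ)

theorem orient_zero_circlePt (α β : ℝ) :
    orient 0 (circlePt α) (circlePt β) = Real.sin (β - α) := by
  simp only [orient, circlePt, Prod.fst_zero, Prod.snd_zero, Real.sin_sub]
  ring

theorem sin_two_mul_add_sub (x y : ℝ) :
    Real.sin (2 * x) + Real.sin (2 * y) - Real.sin (2 * (x + y)) =
      4 * Real.sin x * Real.sin y * Real.sin (x + y) := by
  rw [Real.sin_two_mul (x + y), Real.sin_add, Real.cos_add, Real.sin_two_mul, Real.sin_two_mul]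
  linear_combination (-2 * Real.sin x * Real.cos x) * Real.sin_sq_add_cos_sq y -
    (2 * Real.sin y * Real.cos y) * Real.sin_sq_add_cos_sq x

theorem orient_circlePt (α β γ : ℝ) :
    orient (circlePt α) (circlePt β) (circlePt γ) =
      4 * Real.sin ((β - α) / 2) * Real.sin ((γ - β) / 2) * Real.sin ((γ - α) / 2) := by
  have hsin := sin_two_mul_add_sub ((β - α) / 2) ((γ - β) / 2)
  rw [show (β - α) / 2 + (γ - β) / 2 = (γ - α) / 2 by ring, mul_div_cancel₀ _ two_ne_zero,
    mul_div_cancel₀ _ two_ne_zero, mul_div_cancel₀ _ two_ne_zero] at hsin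
  rw [orient_eq_add 0, orient_zero_circlePt, orient_zero_circlePt, orient_swap_right 0,
    orient_zero_circlePt, ← hsin, ← sub_eq_add_neg]

/- The center of the circumscribed circle lies beyond at most one side of a triangle. With `x`, `y`
the angles of two sides, the orientation of the triangle is
`sin x * (1 - cos y) + sin y * (1 - cos x)`. -/
theorem not_orient_zero_circlePt_mul_neg_and (α β γ : ℝ) :
    ¬(orient 0 (circlePt α) (circlePt β) *
        orient (circlePt α) (circlePt β) (circlePt γ) < 0 ∧
      orient 0 (circlePt β) (circlePt γ) *
        orient (circlePt α) (circlePt β) (circlePt γ) < 0) := by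
  rintro ⟨hx, hy⟩
  have hT : orient (circlePt α) (circlePt β) (circlePt γ) =
      Real.sin (β - α) * (1 - Real.cos (γ - β)) + Real.sin (γ - β) * (1 - Real.cos (β - α)) := by
    rw [orient_eq_add 0, orient_zero_circlePt, orient_zero_circlePt, orient_swap_right 0,
      orient_zero_circlePt, show γ - α = (β - α) + (γ - β) by ring, Real.sin_add]
    ring
  rw [orient_zero_circlePt] at hx hy
  set T := orient (circlePt α) (circlePt β) (circlePt γ)
  have hx' := mul_nonpos_of_nonpos_of_nonneg hx.le (sub_nonneg.mpr (Real.cos_le_one (γ - β)))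
  have hy' := mul_nonpos_of_nonpos_of_nonneg hy.le (sub_nonneg.mpr (Real.cos_le_one (β - α)))
  have hTT : 0 < T * T := mul_self_pos.mpr (right_ne_zero_of_mul hx.ne)
  nth_rw 1 [hT] at hTT
  linarith

end Circle

section RegularPolygon

/-- The vertices of the regular `n`-gon inscribed in the unit circle, in counterclockwise order. -/
noncomputable def polygonVertex {n : ℕ} (i : Fin n) : Pt := circlePt (2 * π * (i / n))

variable {n : ℕ} {a b c : Fin n}

theorem sin_pi_mul_pos {x : ℝ} (h0 : 0 < x) (h1 : x < 1) : 0 < Real.sin (π * x) :=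
  Real.sin_pos_of_pos_of_lt_pi (by positivity) (by nlinarith [Real.pi_pos])

theorem sin_pi_mul_div_sub_div_pos (hab : a < b) : 0 < Real.sin (π * (b / n - a / n)) := by
  have hn : (0 : ℝ) < n := by exact_mod_cast a.pos
  have hab' : (a : ℝ) < b := by exact_mod_cast hab
  have hb : (b : ℝ) < n + a := by exact_mod_cast (show (b : ℕ) < n + a by omega)
  rw [← sub_div]
  exact sin_pi_mul_pos (by rw [lt_div_iff₀ hn]; linarith) (by rw [div_lt_iff₀ hn]; linarith)

theorem orient_polygonVertex_pos_of_lt (hab : a < b) (hbc : b < c) :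
    0 < orient (polygonVertex a) (polygonVertex b) (polygonVertex c) := by
  have hhalf (x y : ℝ) : (2 * π * y - 2 * π * x) / 2 = π * (y - x) := by ring
  simp only [polygonVertex, orient_circlePt, hhalf]
  have := sin_pi_mul_div_sub_div_pos hab
  have := sin_pi_mul_div_sub_div_pos hbc
  have := sin_pi_mul_div_sub_div_pos (hab.trans hbc)
  positivity

theorem orient_polygonVertex_pos (h : a < b ∧ b < c ∨ b < c ∧ c < a ∨ c < a ∧ a < b) :
    0 < orient (polygonVertex a) (polygonVertex b) (polygonVertex c) := by
  rcases h with ⟨hab, hbc⟩ | ⟨hbc, hca⟩ | ⟨hca, hab⟩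
  · exact orient_polygonVertex_pos_of_lt hab hbc
  · exact orient_rotate (polygonVertex a) _ _ ▸ orient_polygonVertex_pos_of_lt hbc hca
  · exact orient_rotate (polygonVertex c) _ _ ▸ orient_polygonVertex_pos_of_lt hca hab

theorem orient_polygonVertex_neg (h : a < c ∧ c < b ∨ c < b ∧ b < a ∨ b < a ∧ a < c) :
    orient (polygonVertex a) (polygonVertex b) (polygonVertex c) < 0 := by
  rw [← neg_pos, ← orient_swap_right]
  exact orient_polygonVertex_pos h

theorem sepIndicator_polygonVertex_nextFin (a b i : Fin n) :
    sepIndicator (polygonVertex a) (polygonVertex b) (polygonVertex i)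
      (polygonVertex (nextFin i)) = 0 := by
  by_cases hdistinct : a = b ∨ i = a ∨ i = b ∨ nextFin i = a ∨ nextFin i = b
  · rcases hdistinct with rfl | rfl | rfl | h | h <;> simp [*]
  have hi := val_nextFin_cases i
  simp only [not_or, Fin.ext_iff] at hdistinct
  rw [sepIndicator, if_neg]
  rw [not_lt]
  by_cases hpos : a < b ∧ b < i ∨ b < i ∧ i < a ∨ i < a ∧ a < b
  · exact mul_nonneg (orient_polygonVertex_pos hpos).le
      (orient_polygonVertex_pos (by simp only [Fin.lt_def] at *; omega)).le
  · exact mul_nonneg_of_nonpos_of_nonpos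
      (orient_polygonVertex_neg (by simp only [Fin.lt_def] at *; omega)).le
      (orient_polygonVertex_neg (by simp only [Fin.lt_def] at *; omega)).le

end RegularPolygon

section OddPolygon

variable {m : ℕ} {a b : Fin (2 * m + 1)}

theorem orient_zero_polygonVertex_pos (h : a < b ∧ b ≤ a.val + m ∨ b + m < a.val) :
    0 < orient 0 (polygonVertex a) (polygonVertex b) := by
  have hn : (0 : ℝ) < (2 * m + 1 : ℕ) := by positivity
  rw [polygonVertex, polygonVertex, orient_zero_circlePt, ← mul_sub, ← sub_div]
  rcases h with ⟨hab, hbm⟩ | hba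
  · have hab' : (a : ℝ) < b := by exact_mod_cast hab
    have hbm' : (b : ℝ) ≤ a + m := by exact_mod_cast hbm
    rw [mul_assoc, mul_left_comm]
    refine sin_pi_mul_pos (by have := sub_pos.mpr hab'; positivity) ?_
    rw [← mul_div_assoc, div_lt_one hn]
    push_cast
    linarith
  · have hba' : (b + m + 1 : ℝ) ≤ a := by exact_mod_cast hba
    have ha : (a + 1 : ℝ) ≤ (2 * m + 1 : ℕ) := by exact_mod_cast a.isLt
    rw [← Real.sin_add_two_pi, show 2 * π * (((b : ℝ) - a) / (2 * m + 1 : ℕ)) + 2 * π =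
      π * (2 * (b - a + (2 * m + 1 : ℕ)) / (2 * m + 1 : ℕ)) by field_simp]
    refine sin_pi_mul_pos (div_pos (by linarith [(b : ℕ).cast_nonneg (α := ℝ)]) hn) ?_
    rw [div_lt_one hn]
    push_cast at *
    linarith

theorem orient_zero_polygonVertex_pos_iff :
    0 < orient 0 (polygonVertex a) (polygonVertex b) ↔
      a < b ∧ b ≤ a.val + m ∨ b + m < a.val := by
  refine ⟨fun hpos => ?_, orient_zero_polygonVertex_pos⟩
  by_contra hab
  rcases eq_or_ne a b with rfl | hne
  · simp at hpos
  · have hba : b < a ∧ a ≤ b.val + m ∨ a + m < b.val := by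
      simp only [ne_eq, Fin.ext_iff, Fin.lt_def] at *
      omega
    have hneg := orient_zero_polygonVertex_pos hba
    rw [orient_swap_right] at hneg
    linarith

theorem orient_zero_polygonVertex_neg_iff :
    orient 0 (polygonVertex a) (polygonVertex b) < 0 ↔
      b < a ∧ a ≤ b.val + m ∨ a + m < b.val := by
  rw [← neg_pos, ← orient_swap_right, orient_zero_polygonVertex_pos_iff]

theorem isGenericStar_polygonVertex (m : ℕ) :
    IsGenericStar 0 (polygonVertex (n := 2 * m + 1)) where
  hub_ne_zero a b hab := by
    rw [ne_iff_lt_or_gt, orient_zero_polygonVertex_neg_iff, orient_zero_polygonVertex_pos_iff]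
    simp only [ne_eq, Fin.ext_iff, Fin.lt_def] at *
    omega
  rim_ne_zero a b c hab hac hbc := by
    by_cases hpos : a < b ∧ b < c ∨ b < c ∧ c < a ∨ c < a ∧ a < b
    · exact (orient_polygonVertex_pos hpos).ne'
    · refine (orient_polygonVertex_neg ?_).ne
      simp only [ne_eq, Fin.ext_iff, Fin.lt_def] at *
      omega

theorem card_leftSet_polygonVertex_le (a : Fin (2 * m + 1)) :
    #(leftSet 0 (polygonVertex (n := 2 * m + 1)) a) ≤ m := by
  refine (Finset.card_le_card_of_injOn (t := Finset.range m)
    (fun b => if a < b then b - a.val - 1 else b + 2 * m - a.val) ?_ ?_).trans_eq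
    (Finset.card_range m)
  · intro b hb
    rw [Finset.mem_coe, mem_leftSet, orient_zero_polygonVertex_pos_iff] at hb
    simp only [Finset.coe_range, Set.mem_Iio, Fin.lt_def] at *
    split <;> omega
  · intro b _ c _ h
    simp only [Fin.lt_def, Fin.ext_iff] at *
    split at h <;> split at h <;> omega

theorem sum_sepIndicator_zero_polygonVertex_le (a : Fin (2 * m + 1)) :
    ∑ i : Fin (2 * m + 1),
      sepIndicator 0 (polygonVertex a) (polygonVertex i) (polygonVertex (nextFin i)) ≤ 1 := by
  simp only [sepIndicator, ← Finset.card_filter]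
  refine Finset.card_le_one.mpr fun i hi j hj => ?_
  have hi' := val_nextFin_cases i
  have hj' := val_nextFin_cases j
  simp only [Finset.mem_filter_univ, mul_neg_iff, orient_zero_polygonVertex_pos_iff,
    orient_zero_polygonVertex_neg_iff, Fin.lt_def] at hi hj
  ext
  omega

theorem two_mul_drawingCrossings_polygonVertex_le (hm : m ≠ 0) :
    2 * drawingCrossings (wheelGraph (2 * m + 1)) (Matrix.vecCons 0 polygonVertex) ≤
      (2 * m + 1) * (m * (m - 1) + 2) := by
  have hstar := isGenericStar_polygonVertex m
  have hinj := ((isRectDrawing_vecCons_iff (by omega)).mpr hstar).1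
  have hleft (a : Fin (2 * m + 1)) :
      #(leftSet 0 polygonVertex a).offDiag ≤ m * (m - 1) := by
    rw [Finset.offDiag_card, ← Nat.mul_sub_one]
    exact Nat.mul_le_mul (card_leftSet_polygonVertex_le a)
      (Nat.sub_le_sub_right (card_leftSet_polygonVertex_le a) 1)
  have hspokes : ∑ c : Fin (2 * m + 1), ∑ a : Fin (2 * m + 1), ∑ b : Fin (2 * m + 1),
      sepIndicator (polygonVertex a) (polygonVertex b) 0 (polygonVertex c) ≤
        ∑ _a : Fin (2 * m + 1), m * (m - 1) :=
    (hstar.le_sum_card_offDiag_leftSet fun _ _ _ =>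
      not_orient_zero_circlePt_mul_neg_and _ _ _).trans (Finset.sum_le_sum fun a _ => hleft a)
  rw [two_mul_drawingCrossings_wheelGraph (by omega) hinj]
  simp only [sepIndicator_polygonVertex_nextFin, Finset.sum_const_zero, add_zero]
  calc _ ≤ ∑ _a : Fin (2 * m + 1), m * (m - 1) + 2 * ∑ _a : Fin (2 * m + 1), 1 := by
        gcongr with a
        exact sum_sepIndicator_zero_polygonVertex_le a
    _ = (2 * m + 1) * (m * (m - 1) + 2) := by
        simp only [Finset.sum_const, Finset.card_univ, Fintype.card_fin, smul_eq_mul, mul_one]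
        ring

end OddPolygon

section OrchardCrossingNumber

theorem OCN_eq_of_forall_le {V : Type*} [Fintype V] [DecidableEq V] {G : SimpleGraph V}
    {f : V → Pt} (hf : IsRectDrawing f)
    (hmin : ∀ g : V → Pt, IsRectDrawing g → drawingCrossings G f ≤ drawingCrossings G g) :
    OCN G = drawingCrossings G f :=
  IsLeast.csInf_eq ⟨⟨f, hf, rfl⟩, by rintro _ ⟨g, hg, rfl⟩; exact hmin g hg⟩

theorem le_two_mul_drawingCrossings_wheelGraph {m : ℕ} (hm : 2 ≤ m)
    {f : Fin (2 * m + 1 + 1) → Pt} (hf : IsRectDrawing f) :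
    (2 * m + 1) * (m * (m - 1) + 2) ≤ 2 * drawingCrossings (wheelGraph (2 * m + 1)) f := by
  rw [← Matrix.cons_head_tail f] at hf ⊢
  have hbound := ((isRectDrawing_vecCons_iff (by omega)).mp hf).le_two_mul_drawingCrossings hm
  zify [show 1 ≤ m by omega]
  exact hbound

theorem two_mul_OCN_wheelGraph {m : ℕ} (hm : 2 ≤ m) :
    2 * OCN (wheelGraph (2 * m + 1)) = (2 * m + 1) * (m * (m - 1) + 2) := by
  have hpolygon := (isRectDrawing_vecCons_iff (by omega)).mpr (isGenericStar_polygonVertex m)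
  have hupper := two_mul_drawingCrossings_polygonVertex_le (m := m) (by omega)
  rw [OCN_eq_of_forall_le hpolygon fun g hg => by
    have := le_two_mul_drawingCrossings_wheelGraph hm hg
    omega]
  exact hupper.antisymm (le_two_mul_drawingCrossings_wheelGraph hm hpolygon)

end OrchardCrossingNumber

/-- For odd n ≥ 5, `OCN(W_{n,1}) = n(n² - 4n + 11)/8`. -/
theorem stmt_7 (n : ℕ) (hn : 5 ≤ n) (hodd : Odd n) :
    OCN (wheelGraph n) = n * (n ^ 2 - 4 * n + 11) / 8 := by
  obtain ⟨m, rfl⟩ := hodd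
  have hquad : (2 * m + 1) ^ 2 - 4 * (2 * m + 1) + 11 = 4 * (m * (m - 1) + 2) := by
    zify [show 1 ≤ m by omega, show 4 * (2 * m + 1) ≤ (2 * m + 1) ^ 2 by nlinarith]
    ring
  have hocn := two_mul_OCN_wheelGraph (m := m) (by omega)
  rw [hquad, mul_left_comm, ← hocn]
  omega
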